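/- arXiv:1301.0156 — 2 statements merged into one kernel-verified Lean document; each statement's English description precedes it below -/
import Mathlib

section
/- Let λ ∈ ℝ. The function f_λ(x) = [ψ'(x)]² + ψ''(x) − (x² + λx + 12)/(12x⁴(x+1)²) is completely monotonic on (0,∞) if and only if λ ≤ 0. -/
/-- The digamma function `ψ(x) = Γ'(x)/Γ(x)`. -/
noncomputable def digamma (x : ℝ) : ℝ := deriv Real.Gamma x / Real.Gamma x

/-- A function is completely monotonic on a set `s` if it has derivatives of all
orders there and `(-1)^n f^(n)(x) ≥ 0` for all `x ∈ s` and all `n ≥ 0`. -/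
def CompletelyMonotonicOn (f : ℝ → ℝ) (s : Set ℝ) : Prop :=
  ContDiffOn ℝ (⊤ : ℕ∞) f s ∧
    ∀ n : ℕ, ∀ x ∈ s, 0 ≤ (-1 : ℝ) ^ n * iteratedDerivWithin n f s x


open Set Filter Topology

/-- Smooth on `(0,∞)` with all derivatives tending to `0` at infinity. -/
def DecayOn (f : ℝ → ℝ) : Prop :=
  ContDiffOn ℝ (⊤ : ℕ∞) f (Ioi 0) ∧
    ∀ n : ℕ, Tendsto (iteratedDerivWithin n f (Ioi 0)) atTop (𝓝 0)

lemma uIoi : UniqueDiffOn ℝ (Ioi (0:ℝ)) := isOpen_Ioi.uniqueDiffOn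

lemma cd_at {f : ℝ → ℝ} (h : ContDiffOn ℝ (⊤ : ℕ∞) f (Ioi 0)) (n : ℕ) {x : ℝ} (hx : x ∈ Ioi (0:ℝ)) :
    ContDiffWithinAt ℝ n f (Ioi 0) x :=
  (h x hx).of_le (by exact_mod_cast le_top)

lemma CM.congr {f g : ℝ → ℝ} (h : CompletelyMonotonicOn f (Ioi 0)) (e : EqOn g f (Ioi 0)) :
    CompletelyMonotonicOn g (Ioi 0) :=
  ⟨h.1.congr e, fun n x hx => by rw [iteratedDerivWithin_congr e hx]; exact h.2 n x hx⟩

lemma CM.add {f g : ℝ → ℝ} (hf : CompletelyMonotonicOn f (Ioi 0))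
    (hg : CompletelyMonotonicOn g (Ioi 0)) :
    CompletelyMonotonicOn (f + g) (Ioi 0) :=
  ⟨hf.1.add hg.1, fun n x hx => by
    rw [iteratedDerivWithin_add hx uIoi (cd_at hf.1 n hx) (cd_at hg.1 n hx), mul_add]
    exact add_nonneg (hf.2 n x hx) (hg.2 n x hx)⟩

lemma CM.mul {f g : ℝ → ℝ} (hf : CompletelyMonotonicOn f (Ioi 0))
    (hg : CompletelyMonotonicOn g (Ioi 0)) :
    CompletelyMonotonicOn (f * g) (Ioi 0) :=
  ⟨hf.1.mul hg.1, fun n x hx => by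
    rw [iteratedDerivWithin_mul hx uIoi (cd_at hf.1 n hx) (cd_at hg.1 n hx), Finset.mul_sum]
    refine Finset.sum_nonneg fun i hi => ?_
    have hi' : i ≤ n := Nat.lt_succ_iff.mp (Finset.mem_range.mp hi)
    have e : (-1 : ℝ) ^ n = (-1) ^ i * (-1) ^ (n - i) := by rw [← pow_add]; congr 1; omega
    have := mul_nonneg (mul_nonneg (Nat.cast_nonneg (α := ℝ) (n.choose i)) (hf.2 i x hx))
      (hg.2 (n - i) x hx)
    rw [e]; convert this using 1; ring⟩

lemma CM.smul {f : ℝ → ℝ} {c : ℝ} (hc : 0 ≤ c) (hf : CompletelyMonotonicOn f (Ioi 0)) :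
    CompletelyMonotonicOn (fun x => f x * c) (Ioi 0) :=
  ⟨hf.1.mul contDiffOn_const, fun n x hx => by
    rw [iteratedDerivWithin_mul_const_field, ← mul_assoc]
    exact mul_nonneg (hf.2 n x hx) hc⟩

lemma DecayOn.congr {f g : ℝ → ℝ} (h : DecayOn f) (e : EqOn g f (Ioi 0)) : DecayOn g :=
  ⟨h.1.congr e, fun n => (h.2 n).congr' (by
    filter_upwards [eventually_gt_atTop 0] with x hx
    exact (iteratedDerivWithin_congr e hx).symm)⟩

lemma DecayOn.add {f g : ℝ → ℝ} (hf : DecayOn f) (hg : DecayOn g) : DecayOn (f + g) :=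
  ⟨hf.1.add hg.1, fun n => by
    have := (hf.2 n).add (hg.2 n)
    rw [add_zero] at this
    refine this.congr' ?_
    filter_upwards [eventually_gt_atTop 0] with x hx0
    have hx : x ∈ Ioi (0:ℝ) := hx0
    rw [iteratedDerivWithin_add hx uIoi (cd_at hf.1 n hx) (cd_at hg.1 n hx)]⟩

lemma DecayOn.mul {f g : ℝ → ℝ} (hf : DecayOn f) (hg : DecayOn g) : DecayOn (f * g) :=
  ⟨hf.1.mul hg.1, fun n => by
    have : Tendsto (fun x => ∑ i ∈ .range (n + 1),
      (n.choose i : ℝ) * iteratedDerivWithin i f (Ioi 0) x * iteratedDerivWithin (n - i) g (Ioi 0) x)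
      atTop (𝓝 (∑ i ∈ .range (n + 1), (n.choose i : ℝ) * 0 * 0)) :=
      tendsto_finsetSum _ fun i _ => ((hf.2 i).const_mul _).mul (hg.2 _)
    simp only [mul_zero, Finset.sum_const_zero] at this
    refine this.congr' ?_
    filter_upwards [eventually_gt_atTop 0] with x hx0
    have hx : x ∈ Ioi (0:ℝ) := hx0
    rw [iteratedDerivWithin_mul hx uIoi (cd_at hf.1 n hx) (cd_at hg.1 n hx)]⟩

lemma DecayOn.smul {f : ℝ → ℝ} (c : ℝ) (hf : DecayOn f) : DecayOn (fun x => f x * c) :=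
  ⟨hf.1.mul contDiffOn_const, fun n => by
    have := (hf.2 n).mul_const c
    rw [zero_mul] at this
    exact this.congr fun x => (iteratedDerivWithin_mul_const_field f c).symm⟩

lemma ladder {g : ℕ → ℝ → ℝ} {c : ℕ → ℝ} (hc : ∀ m, 0 ≤ c m)
    (h : ∀ m x, 0 < x → HasDerivAt (g m) (-(c m) * g (m + 1) x) x) (m n : ℕ) :
    ∃ C : ℝ, 0 ≤ C ∧ EqOn (iteratedDerivWithin n (g m) (Ioi 0))
      (fun x => (-1) ^ n * C * g (m + n) x) (Ioi 0) := by
  induction n with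
  | zero => exact ⟨1, zero_le_one, fun x _ => by simp⟩
  | succ n ih =>
    obtain ⟨C, hC, e⟩ := ih
    refine ⟨C * c (m + n), mul_nonneg hC (hc _), fun x hx => ?_⟩
    rw [iteratedDerivWithin_succ, derivWithin_congr e (e hx)]
    have := ((h (m + n) x hx).const_mul ((-1) ^ n * C)).hasDerivWithinAt (s := Ioi 0)
    rw [this.derivWithin (uIoi x hx)]
    simp only [pow_succ, add_assoc]; ring

lemma ladder_smooth {g : ℕ → ℝ → ℝ} {c : ℕ → ℝ} (hc : ∀ m, 0 ≤ c m)
    (h : ∀ m x, 0 < x → HasDerivAt (g m) (-(c m) * g (m + 1) x) x) (m : ℕ) :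
    ContDiffOn ℝ (⊤ : ℕ∞) (g m) (Ioi 0) := by
  refine contDiffOn_of_differentiableOn_deriv fun n _ => ?_
  obtain ⟨C, -, e⟩ := ladder hc h m n
  refine DifferentiableOn.congr (fun x hx => ?_) e
  exact ((h (m + n) x hx).const_mul _).differentiableAt.differentiableWithinAt

lemma ladder_cm {g : ℕ → ℝ → ℝ} {c : ℕ → ℝ} (hc : ∀ m, 0 ≤ c m)
    (h : ∀ m x, 0 < x → HasDerivAt (g m) (-(c m) * g (m + 1) x) x)
    (hg : ∀ m x, 0 < x → 0 ≤ g m x) (m : ℕ) : CompletelyMonotonicOn (g m) (Ioi 0) := by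
  refine ⟨ladder_smooth hc h m, fun n x hx => ?_⟩
  obtain ⟨C, hC, e⟩ := ladder hc h m n
  rw [e hx]
  have : (-1 : ℝ) ^ n * ((-1) ^ n * C * g (m + n) x) = C * g (m + n) x := by
    rw [← mul_assoc, ← mul_assoc, ← mul_pow]; simp
  rw [this]
  exact mul_nonneg hC (hg _ _ hx)

lemma ladder_decay {g : ℕ → ℝ → ℝ} {c : ℕ → ℝ} (hc : ∀ m, 0 ≤ c m)
    (h : ∀ m x, 0 < x → HasDerivAt (g m) (-(c m) * g (m + 1) x) x)
    (hg : ∀ m, Tendsto (g m) atTop (𝓝 0)) (m : ℕ) : DecayOn (g m) := by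
  refine ⟨ladder_smooth hc h m, fun n => ?_⟩
  obtain ⟨C, hC, e⟩ := ladder hc h m n
  have := (hg (m + n)).const_mul ((-1) ^ n * C)
  rw [mul_zero] at this
  refine this.congr' ?_
  filter_upwards [eventually_gt_atTop 0] with x hx
  exact (e hx).symm

/-- shifted inverse -/
noncomputable def iv (a : ℝ) : ℝ → ℝ := fun x => (x + a)⁻¹

lemma iv_ladder (a : ℝ) (ha : 0 ≤ a) (m : ℕ) (x : ℝ) (hx : 0 < x) :
    HasDerivAt (fun x : ℝ => ((x + a) ^ (m + 1))⁻¹)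
      (-((m : ℝ) + 1) * ((x + a) ^ (m + 1 + 1))⁻¹) x := by
  have h0 : x + a ≠ 0 := by positivity
  have := (((hasDerivAt_id x).add_const a).pow (m + 1)).inv (pow_ne_zero _ h0)
  refine this.congr_deriv ?_
  simp
  field_simp
  ring

lemma cm_iv (a : ℝ) (ha : 0 ≤ a) : CompletelyMonotonicOn (iv a) (Ioi 0) := by
  have := ladder_cm (g := fun m x => ((x + a) ^ (m + 1))⁻¹) (c := fun m => (m : ℝ) + 1)
    (fun m => by positivity) (iv_ladder a ha) (fun m x hx => by positivity) 0
  simp only [zero_add, pow_one] at this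
  exact this

lemma decay_iv (a : ℝ) (ha : 0 ≤ a) : DecayOn (iv a) := by
  have := ladder_decay (g := fun m x => ((x + a) ^ (m + 1))⁻¹) (c := fun m => (m : ℝ) + 1)
    (fun m => by positivity) (iv_ladder a ha) (fun m => by
      refine Tendsto.inv_tendsto_atTop ?_
      exact (tendsto_pow_atTop (by omega)).comp (tendsto_atTop_add_const_right _ a tendsto_id)) 0
  simp only [zero_add, pow_one] at this
  exact this

lemma CM.pow {f : ℝ → ℝ} (hf : CompletelyMonotonicOn f (Ioi 0)) (n : ℕ) :
    CompletelyMonotonicOn (f ^ (n + 1)) (Ioi 0) := by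
  induction n with
  | zero => simpa using hf
  | succ n ih => rw [pow_succ]; exact CM.mul ih hf

lemma DecayOn.pow {f : ℝ → ℝ} (hf : DecayOn f) (n : ℕ) : DecayOn (f ^ (n + 1)) := by
  induction n with
  | zero => simpa using hf
  | succ n ih => rw [pow_succ]; exact DecayOn.mul ih hf

lemma cm_of_diff {F : ℝ → ℝ} (hF : DecayOn F)
    (h : CompletelyMonotonicOn (fun x => F x - F (x + 1)) (Ioi 0)) :
    CompletelyMonotonicOn F (Ioi 0) := by
  refine ⟨hF.1, fun n x hx => ?_⟩
  have hx0 : (0:ℝ) < x := hx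
  have step : ∀ y, 0 < y → (-1 : ℝ) ^ n * iteratedDerivWithin n F (Ioi 0) (y + 1) ≤
      (-1 : ℝ) ^ n * iteratedDerivWithin n F (Ioi 0) y := by
    intro y hy0
    have hy : y ∈ Ioi (0:ℝ) := hy0
    have h1 := h.2 n y hy
    have hmaps : MapsTo (fun z : ℝ => z + 1) (Ioi 0) (Ioi 0) := fun z hz => by
      have : (0:ℝ) < z := hz
      show (0:ℝ) < z + 1
      positivity
    have hc : ContDiffOn ℝ (⊤ : ℕ∞) (fun z => F (z + 1)) (Ioi 0) :=
      hF.1.comp (contDiff_id.add contDiff_const).contDiffOn hmaps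
    have h2 := iteratedDerivWithin_sub (n := n) (x := y) hy uIoi (cd_at hF.1 n hy) (cd_at hc n hy)
    have h3 : iteratedDerivWithin n (fun z => F (z + 1)) (Ioi 0) y =
        iteratedDerivWithin n F (Ioi 0) (y + 1) := by
      rw [iteratedDerivWithin_of_isOpen isOpen_Ioi hy, iteratedDeriv_comp_add_const,
        iteratedDerivWithin_of_isOpen isOpen_Ioi (hmaps hy)]
    rw [h3] at h2
    have h4 : (-1 : ℝ) ^ n * (iteratedDerivWithin n F (Ioi 0) y -
      iteratedDerivWithin n F (Ioi 0) (y + 1)) ≥ 0 := by rw [← h2]; exact h1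
    linarith
  have all : ∀ k : ℕ, (-1 : ℝ) ^ n * iteratedDerivWithin n F (Ioi 0) (x + k) ≤
      (-1 : ℝ) ^ n * iteratedDerivWithin n F (Ioi 0) x := by
    intro k
    induction k with
    | zero => simp
    | succ k ih =>
      have := step (x + k) (by positivity)
      push_cast
      rw [← add_assoc]
      exact this.trans ih
  have lim : Tendsto (fun k : ℕ => (-1 : ℝ) ^ n * iteratedDerivWithin n F (Ioi 0) (x + k)) atTop
      (𝓝 ((-1) ^ n * 0)) :=
    ((hF.2 n).comp (tendsto_atTop_add_const_left _ x tendsto_natCast_atTop_atTop)).const_mul _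
  rw [mul_zero] at lim
  exact le_of_tendsto' lim all

/-- `T m x = ∑ 1/(x+k)^(m+2)` -/
noncomputable def T (m : ℕ) (x : ℝ) : ℝ := ∑' k : ℕ, ((x + k) ^ (m + 2))⁻¹

lemma sum_base (e : ℝ) (he : 0 < e) : Summable (fun k : ℕ => ((e + k) ^ 2)⁻¹) := by
  have h1 : Summable (fun k : ℕ => ((k : ℝ) ^ 2)⁻¹) := Real.summable_nat_pow_inv.mpr (by norm_num)
  refine (summable_nat_add_iff 1).mp ?_
  refine Summable.of_nonneg_of_le (fun k => by positivity) (fun k => ?_)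
    ((summable_nat_add_iff 1).mpr h1)
  gcongr
  linarith

lemma sum_T (m : ℕ) (e : ℝ) (he : 0 < e) : Summable (fun k : ℕ => ((e + k) ^ (m + 2))⁻¹) := by
  refine Summable.of_nonneg_of_le (fun k => by positivity) (fun k => ?_)
    ((sum_base e he).mul_left ((e ^ m)⁻¹))
  rw [pow_add, mul_inv]
  gcongr
  linarith [(Nat.cast_nonneg k : (0:ℝ) ≤ k)]

lemma T_ladder (m : ℕ) (x : ℝ) (hx : 0 < x) :
    HasDerivAt (T m) (-((m : ℝ) + 2) * T (m + 1) x) x := by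
  have hx2 : 0 < x / 2 := by positivity
  have key := hasDerivAt_tsum_of_isPreconnected (𝕜 := ℝ) (F := ℝ)
    (u := fun k : ℕ => ((m : ℝ) + 2) * ((x / 2 + k) ^ (m + 1 + 2))⁻¹)
    (g := fun (k : ℕ) (y : ℝ) => ((y + k) ^ (m + 2))⁻¹)
    (g' := fun (k : ℕ) (y : ℝ) => -((m : ℝ) + 2) * ((y + k) ^ (m + 1 + 2))⁻¹)
    (t := Ioi (x / 2)) (y₀ := x) (y := x)
    ((sum_T (m + 1) _ hx2).mul_left _) isOpen_Ioi isPreconnected_Ioi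
    (fun k y hy => by
      have hy' : 0 < y := hx2.trans hy
      have := iv_ladder k (Nat.cast_nonneg k) (m + 1) y hy'
      refine this.congr_deriv ?_
      push_cast; ring)
    (fun k y hy => by
      have hy1 : x / 2 < y := hy
      have hy' : 0 < y := hx2.trans hy1
      rw [norm_mul, norm_neg, Real.norm_of_nonneg (by positivity : (0:ℝ) ≤ (m:ℝ) + 2),
        Real.norm_of_nonneg (by positivity)]
      gcongr)
    (by show x / 2 < x; linarith) (sum_T m x hx) (by show x / 2 < x; linarith)
  rw [tsum_mul_left] at key
  exact key

lemma T_nonneg (m : ℕ) (x : ℝ) (hx : 0 < x) : 0 ≤ T m x := tsum_nonneg fun k => by positivity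

lemma T_tendsto (m : ℕ) : Tendsto (T m) atTop (𝓝 0) := by
  have := tendsto_tsum_of_dominated_convergence (𝓕 := atTop)
    (f := fun (x : ℝ) (k : ℕ) => ((x + k) ^ (m + 2))⁻¹) (g := fun _ => (0:ℝ))
    (sum_T m 1 one_pos) (fun k => by
      refine Tendsto.inv_tendsto_atTop ?_
      exact (tendsto_pow_atTop (by omega)).comp
        (tendsto_atTop_add_const_right _ (k:ℝ) tendsto_id)) (by
      filter_upwards [eventually_ge_atTop 1] with x hx k
      have : 0 < x := by linarith
      rw [Real.norm_of_nonneg (by positivity)]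
      gcongr)
  rw [tsum_zero] at this
  exact this

lemma decay_T (m : ℕ) : DecayOn (T m) :=
  ladder_decay (c := fun m => (m : ℝ) + 2) (fun m => by positivity) T_ladder T_tendsto m

lemma T_succ (m : ℕ) (x : ℝ) (hx : 0 < x) : T m x = (x ^ (m + 2))⁻¹ + T m (x + 1) := by
  unfold T
  rw [(sum_T m x hx).tsum_eq_zero_add]
  simp only [Nat.cast_zero, add_zero, Nat.cast_add, Nat.cast_one]
  congr 1
  refine tsum_congr fun k => ?_
  rw [show x + ((k:ℝ) + 1) = x + 1 + k by ring]

lemma T_anti (m : ℕ) (x y : ℝ) (hx : 0 < x) (hxy : x ≤ y) : T m y ≤ T m x := by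
  refine (sum_T m y (hx.trans_le hxy)).tsum_le_tsum (fun k => ?_) (sum_T m x hx)
  gcongr

/-! digamma -/
lemma hd_logGamma (x : ℝ) (hx : 0 < x) :
    HasDerivAt (Real.log ∘ Real.Gamma) (digamma x) x := by
  have h := (Real.differentiableAt_Gamma (s := x) (fun m => by
    have : (0:ℝ) ≤ m := Nat.cast_nonneg m
    linarith)).hasDerivAt
  exact h.log (Real.Gamma_pos_of_pos hx).ne'

lemma logGamma_succ (x : ℝ) (hx : 0 < x) :
    (Real.log ∘ Real.Gamma) (x + 1) = (Real.log ∘ Real.Gamma) x + Real.log x := by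
  simp only [Function.comp_apply]
  rw [Real.Gamma_add_one hx.ne', Real.log_mul hx.ne' (Real.Gamma_pos_of_pos hx).ne', add_comm]

lemma digamma_succ (x : ℝ) (hx : 0 < x) : digamma (x + 1) = digamma x + x⁻¹ := by
  have h1 := (hd_logGamma (x + 1) (by positivity)).comp_add_const x 1
  have h2 := (hd_logGamma x hx).add (Real.hasDerivAt_log hx.ne')
  refine h1.unique (h2.congr_of_eventuallyEq ?_)
  filter_upwards [lt_mem_nhds hx] with y hy
  exact logGamma_succ y hy

lemma digamma_le_log (x : ℝ) (hx : 0 < x) : digamma x ≤ Real.log x := by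
  have := Real.convexOn_log_Gamma.le_slope_of_hasDerivAt (x := x) (y := x + 1) hx
    (show (0:ℝ) < x + 1 by positivity) (by linarith) (hd_logGamma x hx)
  rw [slope_def_field, logGamma_succ x hx] at this
  simpa using this

lemma log_le_digamma (x : ℝ) (hx : 0 < x) : Real.log x - x⁻¹ ≤ digamma x := by
  have := Real.convexOn_log_Gamma.slope_le_of_hasDerivAt (x := x) (y := x + 1) hx
    (show (0:ℝ) < x + 1 by positivity) (by linarith) (hd_logGamma (x + 1) (by positivity))
  rw [slope_def_field, logGamma_succ x hx, digamma_succ x hx] at this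
  have h2 : Real.log x ≤ digamma x + x⁻¹ := by simpa using this
  linarith

lemma digamma_sub_log : Tendsto (fun x => digamma x - Real.log x) atTop (𝓝 0) := by
  have h : Tendsto (fun x : ℝ => -x⁻¹) atTop (𝓝 0) := by
    simpa using (tendsto_inv_atTop_zero (𝕜 := ℝ)).neg
  refine tendsto_of_tendsto_of_tendsto_of_le_of_le' h tendsto_const_nhds ?_ ?_
  · filter_upwards [eventually_gt_atTop 0] with x hx
    linarith [log_le_digamma x hx]
  · filter_upwards [eventually_gt_atTop 0] with x hx
    linarith [digamma_le_log x hx]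

lemma digamma_sub (x : ℝ) : Tendsto (fun n : ℕ => digamma (n + x) - digamma (n + 1)) atTop (𝓝 0) := by
  have h0 : Tendsto (fun n : ℕ => (n : ℝ)) atTop atTop := tendsto_natCast_atTop_atTop
  have key : ∀ y : ℝ, Tendsto (fun n : ℕ => digamma (n + y) - Real.log n) atTop (𝓝 0) := by
    intro y
    have a := digamma_sub_log.comp (tendsto_atTop_add_const_right _ y h0)
    have b := (Real.tendsto_log_comp_add_sub_log y).comp h0
    have := a.add b
    rw [add_zero] at this
    refine this.congr fun n => ?_
    simp
  have := (key x).sub (key 1)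
  rw [sub_zero] at this
  refine this.congr fun n => ?_
  ring

lemma digamma_sum (x : ℝ) (hx : 0 < x) (n : ℕ) :
    digamma (n + x) = digamma x + ∑ k ∈ Finset.range n, (x + k)⁻¹ := by
  induction n with
  | zero => simp
  | succ n ih =>
    rw [Finset.sum_range_succ, ← add_assoc, ← ih]
    have := digamma_succ (n + x) (by positivity)
    push_cast
    rw [show (n:ℝ) + 1 + x = n + x + 1 by ring, this, add_comm x]

lemma digamma_lim (x : ℝ) (hx : 0 < x) :
    Tendsto (fun n : ℕ => ∑ k ∈ Finset.range n, ((1 + (k:ℝ))⁻¹ - (x + k)⁻¹)) atTop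
      (𝓝 (digamma x - digamma 1)) := by
  have := (digamma_sub x).const_sub (digamma x - digamma 1)
  rw [sub_zero] at this
  refine this.congr fun n => ?_
  rw [digamma_sum x hx n, digamma_sum 1 one_pos n, Finset.sum_sub_distrib]
  ring

lemma hd_digamma (x : ℝ) (hx : 0 < x) : HasDerivAt digamma (T 0 x) x := by
  obtain ⟨e, he0, hex, he1⟩ : ∃ e : ℝ, 0 < e ∧ e < x ∧ e < 1 := by
    obtain ⟨e, h1, h2⟩ := exists_between (lt_min hx one_pos)
    exact ⟨e, h1, (lt_min_iff.mp h2).1, (lt_min_iff.mp h2).2⟩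
  have hg : ∀ (k : ℕ) (y : ℝ), y ∈ Ioi e → HasDerivAt (fun y : ℝ => (1 + (k:ℝ))⁻¹ - (y + k)⁻¹)
      ((y + k) ^ 2)⁻¹ y := fun k y hy => by
    have hy' : 0 < y := he0.trans hy
    have := (iv_ladder k (Nat.cast_nonneg k) 0 y hy').const_sub ((1 + (k:ℝ))⁻¹)
    simpa using this
  have hg' : ∀ (k : ℕ) (y : ℝ), y ∈ Ioi e → ‖((y + k) ^ 2)⁻¹‖ ≤ ((e + k) ^ 2)⁻¹ := fun k y hy => by
    have hy1 : e < y := hy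
    have hy' : 0 < y := he0.trans hy
    rw [Real.norm_of_nonneg (by positivity)]
    gcongr
  have h1 : Summable fun k : ℕ => (1 + (k:ℝ))⁻¹ - (1 + (k:ℝ))⁻¹ := by
    simp [summable_zero]
  have hsum := fun y (hy : y ∈ Ioi e) => summable_of_summable_hasDerivAt_of_isPreconnected
    (sum_base e he0) isOpen_Ioi isPreconnected_Ioi hg hg' (y₀ := 1) he1 h1 (y := y) hy
  have hder := hasDerivAt_tsum_of_isPreconnected
    (sum_base e he0) isOpen_Ioi isPreconnected_Ioi hg hg' (y₀ := 1) he1 h1 (y := x) hex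
  have := hder.add_const (digamma 1)
  refine this.congr_of_eventuallyEq ?_
  filter_upwards [lt_mem_nhds hex] with y hy
  have := tendsto_nhds_unique (hsum y hy).hasSum.tendsto_sum_nat (digamma_lim y (he0.trans hy))
  rw [this]; ring

lemma deriv_digamma (x : ℝ) (hx : 0 < x) : deriv digamma x = T 0 x := (hd_digamma x hx).deriv

lemma deriv2_digamma (x : ℝ) (hx : 0 < x) : deriv (deriv digamma) x = -2 * T 1 x := by
  have : deriv digamma =ᶠ[𝓝 x] T 0 := by
    filter_upwards [lt_mem_nhds hx] with y hy
    exact deriv_digamma y hy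
  rw [this.deriv_eq, (T_ladder 0 x hx).deriv]
  norm_num

/-- auxiliary function -/
noncomputable def vf : ℝ → ℝ := fun x =>
  T 0 x + iv 0 x * (-1) + (iv 0 ^ 2) x * (-1/2) + (iv 1 ^ 2) x * (-1/24)
    + (iv 0 ^ 2 * iv 1 ^ 2) x * (-1/2)
    + (iv 2 ^ 2) x * (1/24) + (iv 1 * iv 2 ^ 2) x * (-2/24) + (iv 1 ^ 2 * iv 2 ^ 2) x * (13/24)
    + (iv 1 ^ 3 * iv 2 ^ 2) x * (-24/24) + (iv 1 ^ 4 * iv 2 ^ 2) x * (12/24)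

/-- main function at `λ = 0` -/
noncomputable def f0 : ℝ → ℝ := fun x =>
  (T 0 * T 0) x + T 1 x * (-2) + (iv 0 ^ 2 * iv 1 ^ 2) x * (-1/12) + (iv 0 ^ 4 * iv 1 ^ 2) x * (-1)

lemma decay_vf : DecayOn vf := by
  have i0 := decay_iv 0 le_rfl
  have i1 := decay_iv 1 zero_le_one
  have i2 := decay_iv 2 zero_le_two
  exact ((((((((((decay_T 0).add (i0.smul _)).add ((i0.pow 1).smul _)).add ((i1.pow 1).smul _)).add
    (((i0.pow 1).mul (i1.pow 1)).smul _)).add ((i2.pow 1).smul _)).add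
    ((i1.mul (i2.pow 1)).smul _)).add (((i1.pow 1).mul (i2.pow 1)).smul _)).add
    (((i1.pow 2).mul (i2.pow 1)).smul _)).add (((i1.pow 3).mul (i2.pow 1)).smul _))

lemma decay_f0 : DecayOn f0 := by
  have i0 := decay_iv 0 le_rfl
  have i1 := decay_iv 1 zero_le_one
  exact ((((decay_T 0).mul (decay_T 0)).add ((decay_T 1).smul _)).add
    (((i0.pow 1).mul (i1.pow 1)).smul _)).add (((i0.pow 3).mul (i1.pow 1)).smul _)

lemma cm_vf : CompletelyMonotonicOn vf (Ioi 0) := by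
  refine cm_of_diff decay_vf ?_
  have a := cm_iv 1 zero_le_one
  have b := cm_iv 2 zero_le_two
  have c := cm_iv 3 zero_le_three
  have h1 := CM.smul (c := 48/24) (by norm_num) (CM.mul (CM.mul (CM.pow a 3) (CM.pow b 3)) (CM.pow c 1))
  have h2 := CM.smul (c := 96/24) (by norm_num) (CM.mul (CM.mul (CM.pow a 2) (CM.pow b 3)) (CM.pow c 3))
  have h3 := CM.smul (c := 4/24) (by norm_num) (CM.mul (CM.pow b 1) (CM.pow c 3))
  have h4 := CM.smul (c := 2/24) (by norm_num) (CM.mul a (CM.pow b 3))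
  have h5 := CM.smul (c := 56/72) (by norm_num) (CM.mul (CM.pow b 3) (CM.pow c 3))
  have h6 := CM.smul (c := 202/72) (by norm_num) (CM.mul (CM.pow b 3) c)
  have h7 := CM.smul (c := 32/72) (by norm_num) (CM.mul b (CM.pow c 3))
  have h8 := CM.smul (c := 48/24) (by norm_num) (CM.mul (CM.mul (CM.pow a 2) (CM.pow b 3)) (CM.pow c 2))
  refine CM.congr (CM.add (CM.add (CM.add (CM.add (CM.add (CM.add (CM.add h1 h2) h3) h4) h5) h6) h7) h8) ?_
  intro x hx
  have hx0 : (0:ℝ) < x := hx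
  simp only [vf, iv, Pi.add_apply, Pi.mul_apply, Pi.pow_apply]
  rw [T_succ 0 x hx0]
  have e1 : x + 1 + 1 = x + 2 := by ring
  have e2 : x + 1 + 2 = x + 3 := by ring
  rw [e1, e2]
  have n0 : x ≠ 0 := hx0.ne'
  have n1 : x + 1 ≠ 0 := by positivity
  have n2 : x + 2 ≠ 0 := by positivity
  have n3 : x + 3 ≠ 0 := by positivity
  simp only [add_zero, zero_add, Nat.reduceAdd]
  field_simp
  ring

lemma cm_f0 : CompletelyMonotonicOn f0 (Ioi 0) := by
  refine cm_of_diff decay_f0 ?_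
  have h := CM.smul (c := 2) (by norm_num) (CM.mul (CM.pow (cm_iv 0 le_rfl) 1) cm_vf)
  refine CM.congr h ?_
  intro x hx
  have hx0 : (0:ℝ) < x := hx
  simp only [f0, vf, iv, Pi.add_apply, Pi.mul_apply, Pi.pow_apply]
  rw [T_succ 0 x hx0, T_succ 1 x hx0]
  have e1 : x + 1 + 1 = x + 2 := by ring
  rw [e1]
  have n0 : x ≠ 0 := hx0.ne'
  have n1 : x + 1 ≠ 0 := by positivity
  have n2 : x + 2 ≠ 0 := by positivity
  simp only [add_zero, zero_add, Nat.reduceAdd]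
  field_simp
  ring

theorem stmt_0 (lam : ℝ) :
    CompletelyMonotonicOn
      (fun x : ℝ => (deriv digamma x) ^ 2 + deriv (deriv digamma) x -
        (x ^ 2 + lam * x + 12) / (12 * x ^ 4 * (x + 1) ^ 2))
      (Set.Ioi 0) ↔ lam ≤ 0 := by
  constructor
  · intro h
    set A := T 0 1 with hA
    have key : ∀ x : ℝ, 0 < x →
        lam ≤ x * (-37 + 24 * A + x * (-24 + 48 * A) + x ^ 2 * (24 * A + 12 * A ^ 2)
          + 24 * A ^ 2 * x ^ 3 + 12 * A ^ 2 * x ^ 4) := by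
      intro x hx
      have h0 := h.2 0 x hx
      simp only [pow_zero, one_mul, iteratedDerivWithin_zero] at h0
      rw [deriv_digamma x hx, deriv2_digamma x hx, T_succ 0 x hx, T_succ 1 x hx] at h0
      have t0 : T 0 (x + 1) ≤ A := T_anti 0 1 (x + 1) one_pos (by linarith)
      have t0' : 0 ≤ T 0 (x + 1) := T_nonneg 0 _ (by positivity)
      have t1 : 0 ≤ T 1 (x + 1) := T_nonneg 1 _ (by positivity)
      have hsq : ((x ^ (0 + 2))⁻¹ + T 0 (x + 1)) ^ 2 ≤ ((x ^ 2)⁻¹ + A) ^ 2 := by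
        gcongr
      have h1 : 0 ≤ ((x ^ 2)⁻¹ + A) ^ 2 - 2 * (x ^ 3)⁻¹ -
          (x ^ 2 + lam * x + 12) / (12 * x ^ 4 * (x + 1) ^ 2) := by
        norm_num at h0 hsq ⊢
        linarith
      have h2 := mul_nonneg h1 (by positivity : 0 ≤ 12 * x ^ 3 * (x + 1) ^ 2)
      have h3 : (((x ^ 2)⁻¹ + A) ^ 2 - 2 * (x ^ 3)⁻¹ -
          (x ^ 2 + lam * x + 12) / (12 * x ^ 4 * (x + 1) ^ 2)) * (12 * x ^ 3 * (x + 1) ^ 2) =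
          x * (-37 + 24 * A + x * (-24 + 48 * A) + x ^ 2 * (24 * A + 12 * A ^ 2)
          + 24 * A ^ 2 * x ^ 3 + 12 * A ^ 2 * x ^ 4) - lam := by
        field_simp
        ring
      linarith
    have lim : Tendsto (fun x : ℝ => x * (-37 + 24 * A + x * (-24 + 48 * A)
          + x ^ 2 * (24 * A + 12 * A ^ 2)
          + 24 * A ^ 2 * x ^ 3 + 12 * A ^ 2 * x ^ 4)) (𝓝[>] 0) (𝓝 0) := by
      have : Continuous (fun x : ℝ => x * (-37 + 24 * A + x * (-24 + 48 * A)
          + x ^ 2 * (24 * A + 12 * A ^ 2)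
          + 24 * A ^ 2 * x ^ 3 + 12 * A ^ 2 * x ^ 4)) := by fun_prop
      have := this.tendsto 0
      rw [zero_mul] at this
      exact this.mono_left nhdsWithin_le_nhds
    refine ge_of_tendsto lim ?_
    filter_upwards [self_mem_nhdsWithin] with x hx
    exact key x hx
  · intro hl
    have h := CM.smul (c := -lam / 12) (by linarith)
      (CM.mul (CM.pow (cm_iv 0 le_rfl) 2) (CM.pow (cm_iv 1 zero_le_one) 1))
    refine CM.congr (CM.add cm_f0 h) ?_
    intro x hx
    have hx0 : (0:ℝ) < x := hx
    simp only [f0, iv, Pi.add_apply, Pi.mul_apply, Pi.pow_apply]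
    rw [deriv_digamma x hx0, deriv2_digamma x hx0]
    have n1 : x + 1 ≠ 0 := by positivity
    simp only [add_zero, Nat.reduceAdd]
    field_simp
    ring
end

section
/- Let λ ∈ ℝ. The function −f_λ(x), where f_λ(x) = [ψ'(x)]² + ψ''(x) − (x² + λx + 12)/(12x⁴(x+1)²), is completely monotonic on (0,∞) if and only if λ ≥ 4. -/
open Set Filter Topology

namespace CMProof

def Dec (f : ℝ → ℝ) : Prop :=
  ContDiffOn ℝ (⊤ : ℕ∞) f (Ioi 0) ∧ ∀ n : ℕ, Tendsto (iteratedDeriv n f) atTop (𝓝 0)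

def CM (f : ℝ → ℝ) : Prop :=
  ContDiffOn ℝ (⊤ : ℕ∞) f (Ioi 0) ∧ ∀ n : ℕ, ∀ x : ℝ, 0 < x → 0 ≤ (-1 : ℝ) ^ n * iteratedDeriv n f x

lemma cdAt {f : ℝ → ℝ} (h : ContDiffOn ℝ (⊤ : ℕ∞) f (Ioi 0)) (n : ℕ) {x : ℝ} (hx : 0 < x) :
    ContDiffAt ℝ n f x :=
  (h.contDiffAt (Ioi_mem_nhds hx)).of_le (by exact_mod_cast le_top)

lemma CM_iff (f : ℝ → ℝ) : CompletelyMonotonicOn f (Ioi 0) ↔ CM f := by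
  unfold CompletelyMonotonicOn CM
  refine and_congr Iff.rfl (forall_congr' fun n => forall_congr' fun x => ?_)
  refine forall_congr' fun hx => ?_
  rw [iteratedDerivWithin_of_isOpen isOpen_Ioi hx]

lemma CM.congr {f g : ℝ → ℝ} (hf : CM f) (h : ∀ x, 0 < x → g x = f x) : CM g := by
  refine ⟨hf.1.congr h, fun n x hx => ?_⟩
  rw [Set.EqOn.iteratedDeriv_of_isOpen (s := Ioi 0) h isOpen_Ioi n hx]
  exact hf.2 n x hx

lemma Dec.congr {f g : ℝ → ℝ} (hf : Dec f) (h : ∀ x, 0 < x → g x = f x) : Dec g := by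
  refine ⟨hf.1.congr h, fun n => (hf.2 n).congr' ?_⟩
  filter_upwards [eventually_gt_atTop 0] with x hx
  exact (Set.EqOn.iteratedDeriv_of_isOpen (s := Ioi 0) h isOpen_Ioi n hx).symm

lemma CM.add {f g : ℝ → ℝ} (hf : CM f) (hg : CM g) : CM (fun x => f x + g x) := by
  refine ⟨hf.1.add hg.1, fun n x hx => ?_⟩
  have := iteratedDeriv_add (cdAt hf.1 n hx) (cdAt hg.1 n hx)
  change 0 ≤ _ * iteratedDeriv n (f + g) x
  rw [this, mul_add]
  exact add_nonneg (hf.2 n x hx) (hg.2 n x hx)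

lemma Dec.add {f g : ℝ → ℝ} (hf : Dec f) (hg : Dec g) : Dec (fun x => f x + g x) := by
  refine ⟨hf.1.add hg.1, fun n => ?_⟩
  have := (hf.2 n).add (hg.2 n)
  rw [add_zero] at this
  refine this.congr' ?_
  filter_upwards [eventually_gt_atTop 0] with x hx
  exact (iteratedDeriv_add (cdAt hf.1 n hx) (cdAt hg.1 n hx)).symm

lemma CM.mul {f g : ℝ → ℝ} (hf : CM f) (hg : CM g) : CM (fun x => f x * g x) := by
  refine ⟨hf.1.mul hg.1, fun n x hx => ?_⟩
  have := iteratedDeriv_mul (cdAt hf.1 n hx) (cdAt hg.1 n hx)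
  change 0 ≤ _ * iteratedDeriv n (f * g) x
  rw [this, Finset.mul_sum]
  refine Finset.sum_nonneg fun i hi => ?_
  have hi' : i ≤ n := by simpa [Nat.lt_succ_iff] using hi
  have e : (-1 : ℝ) ^ n = (-1) ^ i * (-1) ^ (n - i) := by rw [← pow_add]; congr 1; omega
  have := mul_nonneg (mul_nonneg (Nat.cast_nonneg (α := ℝ) (n.choose i)) (hf.2 i x hx))
    (hg.2 (n - i) x hx)
  rw [e]
  linarith

lemma Dec.mul {f g : ℝ → ℝ} (hf : Dec f) (hg : Dec g) : Dec (fun x => f x * g x) := by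
  refine ⟨hf.1.mul hg.1, fun n => ?_⟩
  have : Tendsto (fun x => ∑ i ∈ Finset.range (n + 1),
      (n.choose i : ℝ) * iteratedDeriv i f x * iteratedDeriv (n - i) g x) atTop
      (𝓝 (∑ i ∈ Finset.range (n + 1), (n.choose i : ℝ) * 0 * 0)) :=
    tendsto_finsetSum _ fun i _ => ((hf.2 i).const_mul _).mul (hg.2 _)
  simp only [mul_zero, Finset.sum_const_zero] at this
  refine this.congr' ?_
  filter_upwards [eventually_gt_atTop 0] with x hx
  exact (iteratedDeriv_mul (cdAt hf.1 n hx) (cdAt hg.1 n hx)).symm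

lemma CM.const {c : ℝ} (hc : 0 ≤ c) : CM (fun _ => c) := by
  refine ⟨contDiffOn_const, fun n x _ => ?_⟩
  rw [iteratedDeriv_const]
  split_ifs with h
  · simp [h, hc]
  · simp

lemma CM.const_mul {f : ℝ → ℝ} (hf : CM f) {c : ℝ} (hc : 0 ≤ c) : CM (fun x => c * f x) :=
  (CM.const hc).mul hf

lemma Dec.const_mul {f : ℝ → ℝ} (hf : Dec f) (c : ℝ) : Dec (fun x => c * f x) := by
  refine ⟨contDiffOn_const.mul hf.1, fun n => ?_⟩
  have := (hf.2 n).const_mul c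
  rw [mul_zero] at this
  refine this.congr fun x => ?_
  rw [iteratedDeriv_const_mul_field]

lemma Dec.sub {f g : ℝ → ℝ} (hf : Dec f) (hg : Dec g) : Dec (fun x => f x - g x) :=
  (hf.add (hg.const_mul (-1))).congr fun x _ => by ring

lemma CM.pow {f : ℝ → ℝ} (hf : CM f) (n : ℕ) : CM (fun x => f x ^ n) := by
  induction n with
  | zero => simpa using CM.const zero_le_one
  | succ n ih => simpa only [pow_succ] using ih.mul hf

lemma Dec.pow {f : ℝ → ℝ} (hf : Dec f) (n : ℕ) : Dec (fun x => f x ^ (n + 1)) := by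
  induction n with
  | zero => simpa using hf
  | succ n ih => simpa only [pow_succ _ (n + 1)] using ih.mul hf

lemma Dec.deriv {f : ℝ → ℝ} (hf : Dec f) : Dec (deriv f) := by
  refine ⟨hf.1.deriv_of_isOpen isOpen_Ioi (by simp), fun n => ?_⟩
  simpa only [iteratedDeriv_succ'] using hf.2 (n + 1)

lemma cd_inv {a : ℝ} (ha : 0 ≤ a) : ContDiffOn ℝ (⊤ : ℕ∞) (fun x : ℝ => (x + a)⁻¹) (Ioi 0) := by
  refine ContDiffOn.inv (by fun_prop) fun x hx => ?_
  have : 0 < x := hx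
  positivity

lemma iter_inv (a : ℝ) (n : ℕ) (x : ℝ) : iteratedDeriv n (fun x : ℝ => (x + a)⁻¹) x =
    (-1) ^ n * n.factorial * ((x + a)⁻¹) ^ (n + 1) := by
  have := congrFun (iter_deriv_inv_linear n (1 : ℝ) a) x
  simp only [one_mul, one_pow, mul_one] at this
  rw [iteratedDeriv_eq_iterate, this, inv_pow, ← zpow_natCast (x + a), ← zpow_neg]
  congr 2
  push_cast
  ring

lemma CM_inv {a : ℝ} (ha : 0 ≤ a) : CM (fun x : ℝ => (x + a)⁻¹) := by
  refine ⟨cd_inv ha, fun n x hx => ?_⟩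
  rw [iter_inv, ← mul_assoc, ← mul_assoc, ← mul_pow]
  norm_num
  positivity

lemma tendsto_inv (a : ℝ) : Tendsto (fun x : ℝ => (x + a)⁻¹) atTop (𝓝 0) :=
  tendsto_inv_atTop_zero.comp (tendsto_atTop_add_const_right _ _ tendsto_id)

lemma Dec_inv {a : ℝ} (ha : 0 ≤ a) : Dec (fun x : ℝ => (x + a)⁻¹) := by
  refine ⟨cd_inv ha, fun n => ?_⟩
  have := ((tendsto_inv a).pow (n + 1)).const_mul ((-1) ^ n * (n.factorial : ℝ))
  simp only [ne_eq, Nat.add_eq_zero_iff, one_ne_zero, and_false, not_false_eq_true, zero_pow,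
    mul_zero] at this
  refine this.congr fun x => (iter_inv a n x).symm

lemma nonneg_of_step {a : ℝ → ℝ} (h0 : Tendsto a atTop (𝓝 0)) {x : ℝ}
    (h : ∀ y, x ≤ y → a (y + 1) ≤ a y) : 0 ≤ a x := by
  have key : ∀ k : ℕ, a (x + k) ≤ a x := by
    intro k
    induction k with
    | zero => simp
    | succ k ih =>
      have := h (x + k) (by simp)
      push_cast
      rw [← add_assoc]
      exact this.trans ih
  have : Tendsto (fun k : ℕ => a (x + k)) atTop (𝓝 0) :=
    h0.comp (tendsto_atTop_add_const_left _ _ tendsto_natCast_atTop_atTop)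
  exact le_of_tendsto' this key

lemma CM_of_step {F : ℝ → ℝ} (hF : Dec F) (h : CM (fun x => F x - F (x + 1))) : CM F := by
  refine ⟨hF.1, fun n x hx => ?_⟩
  refine nonneg_of_step (a := fun x => (-1 : ℝ) ^ n * iteratedDeriv n F x) ?_ ?_
  · simpa using (hF.2 n).const_mul ((-1 : ℝ) ^ n)
  · intro y hy
    have hy0 : 0 < y := hx.trans_le hy
    have h1 := h.2 n y hy0
    have hs : ContDiffAt ℝ n (fun z => F (z + 1)) y :=
      ContDiffAt.comp y (cdAt hF.1 n (by positivity : 0 < y + 1)) (by fun_prop)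
    have h2 := iteratedDeriv_sub (cdAt hF.1 n hy0) hs
    rw [iteratedDeriv_comp_add_const] at h2
    change 0 ≤ _ * iteratedDeriv n (F - fun z => F (z + 1)) y at h1
    rw [h2] at h1
    linarith

/-! The digamma function -/

lemma Gamma_cd {x : ℝ} (hx : 0 < x) : ContDiffAt ℝ (⊤ : ℕ∞) Real.Gamma x := by
  have : AnalyticAt ℂ Complex.Gamma (x : ℂ) := by
    have hU : IsOpen {z : ℂ | 0 < z.re} := isOpen_lt continuous_const Complex.continuous_re
    refine DifferentiableOn.analyticAt (s := {z : ℂ | 0 < z.re}) (fun z hz => ?_)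
      (hU.mem_nhds (by simpa using hx))
    refine (Complex.differentiableAt_Gamma z fun m hm => ?_).differentiableWithinAt
    have : 0 < z.re := hz
    rw [hm] at this
    simp at this
    linarith [Nat.cast_nonneg (α := ℝ) m]
  have h := (this.contDiffAt (n := (⊤ : ℕ∞))).real_of_complex
  exact h

lemma Gamma_cdOn : ContDiffOn ℝ (⊤ : ℕ∞) Real.Gamma (Ioi 0) :=
  fun _ hx => (Gamma_cd hx).contDiffWithinAt

lemma digamma_cd : ContDiffOn ℝ (⊤ : ℕ∞) digamma (Ioi 0) :=
  (Gamma_cdOn.deriv_of_isOpen isOpen_Ioi (by simp)).div Gamma_cdOn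
    fun x hx => (Real.Gamma_pos_of_pos hx).ne'

lemma Gamma_diff {x : ℝ} (hx : 0 < x) : DifferentiableAt ℝ Real.Gamma x :=
  (Gamma_cd hx).differentiableAt (by simp)

lemma digamma_eq {x : ℝ} (hx : 0 < x) : deriv (Real.log ∘ Real.Gamma) x = digamma x :=
  ((Gamma_diff hx).hasDerivAt.log (Real.Gamma_pos_of_pos hx).ne').deriv

lemma digamma_mono : MonotoneOn digamma (Ioi 0) := by
  refine MonotoneOn.congr (Real.convexOn_log_Gamma.monotoneOn_deriv fun x hx => ?_)
    fun x hx => digamma_eq hx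
  exact (Gamma_diff hx).log (Real.Gamma_pos_of_pos hx).ne'

lemma digamma_add_one {x : ℝ} (hx : 0 < x) : digamma (x + 1) = digamma x + x⁻¹ := by
  have h1 : deriv Real.Gamma (x + 1) = Real.Gamma x + x * deriv Real.Gamma x := by
    rw [← deriv_comp_add_const]
    have : (fun x : ℝ => Real.Gamma (x + 1)) =ᶠ[𝓝 x] fun x => x * Real.Gamma x := by
      filter_upwards [Ioi_mem_nhds hx] with y hy
      exact Real.Gamma_add_one (ne_of_gt hy)
    rw [this.deriv_eq, ((hasDerivAt_id' x).fun_mul (Gamma_diff hx).hasDerivAt).deriv]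
    ring
  have := (Real.Gamma_pos_of_pos hx).ne'
  unfold digamma
  rw [h1, Real.Gamma_add_one hx.ne']
  field_simp
  ring

lemma digamma_add_nat {x : ℝ} (hx : 0 < x) (n : ℕ) :
    digamma (x + n) = digamma x + ∑ k ∈ Finset.range n, (x + k)⁻¹ := by
  induction n with
  | zero => simp
  | succ n ih =>
    rw [Finset.sum_range_succ, ← add_assoc, ← ih, Nat.cast_succ, ← add_assoc]
    exact digamma_add_one (by positivity)

lemma digamma_diff_tendsto {x y : ℝ} (hx : 0 < x) (hxy : x ≤ y) :
    Tendsto (fun n : ℕ => digamma (y + n) - digamma (x + n)) atTop (𝓝 0) := by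
  obtain ⟨m, hm⟩ := exists_nat_ge (y - x)
  have hlim : Tendsto (fun n : ℕ => ∑ k ∈ Finset.range m, ((n : ℝ) + (x + k))⁻¹) atTop
      (𝓝 (∑ k ∈ Finset.range m, 0)) :=
    tendsto_finsetSum _ fun k _ => (tendsto_inv _).comp tendsto_natCast_atTop_atTop
  rw [Finset.sum_const_zero] at hlim
  refine tendsto_of_tendsto_of_tendsto_of_le_of_le tendsto_const_nhds hlim ?_ ?_
  · intro n
    have : digamma (x + n) ≤ digamma (y + n) :=
      digamma_mono (show 0 < x + n by positivity) (show 0 < y + n by linarith [show 0 < x + n by positivity])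
        (by linarith)
    simpa using this
  · intro n
    have hxn : 0 < x + n := by positivity
    have h1 := digamma_mono (show 0 < y + n by linarith) (show 0 < x + n + m by positivity)
      (by linarith)
    rw [digamma_add_nat hxn] at h1
    simp only [tsub_le_iff_right]
    refine h1.trans (le_of_eq ?_)
    rw [add_comm]
    congr 1
    refine Finset.sum_congr rfl fun k _ => ?_
    ring

noncomputable def T (k : ℕ) (x : ℝ) : ℝ := ∑' n : ℕ, ((x + n)⁻¹) ^ (k + 2)

lemma summ {e : ℝ} (he : 0 < e) (k : ℕ) : Summable fun n : ℕ => ((e + n)⁻¹) ^ (k + 2) := by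
  have h := (Real.summable_one_div_nat_add_rpow e ((k + 2 : ℕ) : ℝ)).2 (by push_cast; linarith [Nat.cast_nonneg (α := ℝ) k])
  refine h.congr fun n => ?_
  rw [Real.rpow_natCast, abs_of_pos (by positivity), add_comm, inv_pow, one_div]

lemma T_deriv (k : ℕ) {x : ℝ} (hx : 0 < x) : HasDerivAt (T k) (-(k + 2) * T (k + 1) x) x := by
  have hx2 : 0 < x / 2 := by positivity
  have := hasDerivAt_tsum_of_isPreconnected (t := Ioi (x / 2)) (y₀ := x) (y := x)
    (g := fun (n : ℕ) (y : ℝ) => ((y + n)⁻¹) ^ (k + 2))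
    (g' := fun (n : ℕ) (y : ℝ) => -(k + 2) * ((y + n)⁻¹) ^ (k + 1 + 2))
    (u := fun n : ℕ => (k + 2) * ((x / 2 + n)⁻¹) ^ (k + 1 + 2))
    ((summ hx2 (k + 1)).mul_left _) isOpen_Ioi isPreconnected_Ioi ?_ ?_
    (by simp [hx]) (summ hx k) (by simp [hx])
  · rw [tsum_mul_left] at this
    exact this
  · intro n y hy
    have hy' : 0 < y + n := by
      have : x / 2 < y := hy
      have : 0 < y := hx2.trans this
      positivity
    have := (((hasDerivAt_id' y).add_const (n : ℝ)).inv hy'.ne').pow (k + 2)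
    refine this.congr_deriv ?_
    simp only [Pi.inv_apply]
    push_cast
    rw [pow_add _ (k + 1) 2, inv_pow _ 2]
    ring
  · intro n y hy
    have h1 : x / 2 < y := hy
    have : 0 < y := hx2.trans h1
    rw [Real.norm_eq_abs, abs_mul, abs_neg, abs_of_nonneg (by positivity), abs_of_nonneg (by positivity)]
    gcongr

lemma T_tendsto (k : ℕ) : Tendsto (T k) atTop (𝓝 0) := by
  have := tendsto_tsum_of_dominated_convergence (𝓕 := atTop)
    (f := fun (x : ℝ) (n : ℕ) => ((x + n)⁻¹) ^ (k + 2)) (g := fun _ => (0 : ℝ))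
    (bound := fun n : ℕ => (((1 : ℝ) + n)⁻¹) ^ (k + 2)) (summ one_pos k) ?_ ?_
  · rw [tsum_zero] at this
    exact this
  · intro n
    simpa using (tendsto_inv n).pow (k + 2)
  · filter_upwards [eventually_ge_atTop 1] with x hx n
    rw [Real.norm_eq_abs, abs_of_nonneg (by positivity)]
    gcongr

lemma T_iter (n : ℕ) : ∃ c : ℝ, ∀ x, 0 < x → iteratedDeriv n (T 0) x = c * T n x := by
  induction n with
  | zero => exact ⟨1, fun x _ => by simp⟩
  | succ n ih =>
    obtain ⟨c, hc⟩ := ih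
    refine ⟨c * (-(n + 2)), fun x hx => ?_⟩
    rw [iteratedDeriv_succ]
    have : iteratedDeriv n (T 0) =ᶠ[𝓝 x] fun x => c * T n x := by
      filter_upwards [Ioi_mem_nhds hx] with y hy using hc y hy
    rw [this.deriv_eq, ((T_deriv n hx).const_mul c).deriv]
    ring

lemma digamma_series {x : ℝ} (hx : 0 < x) :
    HasDerivAt (fun y : ℝ => ∑' n : ℕ, ((1 + (n : ℝ))⁻¹ - (y + n)⁻¹)) (T 0 x) x ∧
      Summable (fun n : ℕ => ((1 + (n : ℝ))⁻¹ - (x + n)⁻¹)) := by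
  set e := min (x / 2) (1 / 2) with he
  have he0 : 0 < e := by positivity
  have hex : e < x := (min_le_left _ _).trans_lt (by linarith)
  have he1 : e < 1 := (min_le_right _ _).trans_lt (by norm_num)
  have A : ∀ (n : ℕ) (y : ℝ), y ∈ Ioi e →
      HasDerivAt (fun y : ℝ => (1 + (n : ℝ))⁻¹ - (y + n)⁻¹) (((y + n)⁻¹) ^ 2) y := by
    intro n y hy
    have hy' : 0 < y + n := by
      have : 0 < y := he0.trans hy
      positivity
    have := (((hasDerivAt_id' y).add_const (n : ℝ)).inv hy'.ne').const_sub ((1 + (n : ℝ))⁻¹)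
    refine this.congr_deriv ?_
    rw [inv_pow]
    ring
  have B : ∀ (n : ℕ) (y : ℝ), y ∈ Ioi e → ‖((y + n)⁻¹) ^ 2‖ ≤ ((e + n)⁻¹) ^ (0 + 2) := by
    intro n y hy
    have h1 : e < y := hy
    have : 0 < y := he0.trans hy
    rw [Real.norm_eq_abs, abs_of_nonneg (by positivity)]
    gcongr
  have C : Summable (fun n : ℕ => ((1 + (n : ℝ))⁻¹ - ((1 : ℝ) + n)⁻¹)) := by
    simp [summable_zero]
  exact ⟨hasDerivAt_tsum_of_isPreconnected (summ he0 0) isOpen_Ioi isPreconnected_Ioi A B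
      (y₀ := 1) he1 C hex,
    summable_of_summable_hasDerivAt_of_isPreconnected (summ he0 0) isOpen_Ioi isPreconnected_Ioi A B
      (y₀ := 1) he1 C hex⟩

lemma digamma_eq_series {x : ℝ} (hx : 0 < x) :
    digamma x = digamma 1 + ∑' n : ℕ, ((1 + (n : ℝ))⁻¹ - (x + n)⁻¹) := by
  have h1 := (digamma_series hx).2.hasSum.tendsto_sum_nat
  have h2 : Tendsto (fun n : ℕ => digamma (x + n) - digamma (1 + n)) atTop (𝓝 0) := by
    rcases le_total 1 x with h | h
    · exact digamma_diff_tendsto one_pos h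
    · simpa using (digamma_diff_tendsto hx h).neg
  have h3 := h1.add h2
  have h4 : Tendsto (fun _ : ℕ => digamma x - digamma 1) atTop
      (𝓝 (digamma x - digamma 1)) := tendsto_const_nhds
  have := tendsto_nhds_unique (h4.congr fun n => ?_) h3
  · linarith
  · rw [digamma_add_nat hx, digamma_add_nat one_pos, Finset.sum_sub_distrib]
    ring

lemma deriv_digamma {x : ℝ} (hx : 0 < x) : deriv digamma x = T 0 x := by
  have : digamma =ᶠ[𝓝 x] fun x => digamma 1 + ∑' n : ℕ, ((1 + (n : ℝ))⁻¹ - (x + n)⁻¹) := by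
    filter_upwards [Ioi_mem_nhds hx] with y hy using digamma_eq_series hy
  rw [this.deriv_eq]
  exact ((digamma_series hx).1.const_add _).deriv

lemma Dec_tri : Dec (deriv digamma) := by
  have h : ContDiffOn ℝ (⊤ : ℕ∞) (deriv digamma) (Ioi 0) :=
    digamma_cd.deriv_of_isOpen isOpen_Ioi (by simp)
  refine ⟨h, fun n => ?_⟩
  obtain ⟨c, hc⟩ := T_iter n
  have := (T_tendsto n).const_mul c
  rw [mul_zero] at this
  refine this.congr' ?_
  filter_upwards [eventually_gt_atTop 0] with x hx
  rw [← hc x hx]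
  exact (Set.EqOn.iteratedDeriv_of_isOpen (s := Ioi 0) (fun y hy => deriv_digamma hy)
    isOpen_Ioi n hx).symm

lemma tri_add_one {x : ℝ} (hx : 0 < x) :
    deriv digamma (x + 1) = deriv digamma x - (x⁻¹) ^ 2 := by
  rw [← deriv_comp_add_const]
  have : (fun x : ℝ => digamma (x + 1)) =ᶠ[𝓝 x] fun x => digamma x + x⁻¹ := by
    filter_upwards [Ioi_mem_nhds hx] with y hy using digamma_add_one hy
  have hd : DifferentiableAt ℝ digamma x :=
    (digamma_cd.contDiffAt (Ioi_mem_nhds hx)).differentiableAt (by simp)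
  rw [this.deriv_eq, (hd.hasDerivAt.fun_add (hasDerivAt_inv hx.ne')).deriv, inv_pow]
  ring

lemma tetra_add_one {x : ℝ} (hx : 0 < x) :
    deriv (deriv digamma) (x + 1) = deriv (deriv digamma) x + 2 * (x⁻¹) ^ 3 := by
  rw [← deriv_comp_add_const]
  have : (fun x : ℝ => deriv digamma (x + 1)) =ᶠ[𝓝 x] fun x => deriv digamma x - (x⁻¹) ^ 2 := by
    filter_upwards [Ioi_mem_nhds hx] with y hy using tri_add_one hy
  have hd : DifferentiableAt ℝ (deriv digamma) x :=
    (Dec_tri.1.contDiffAt (Ioi_mem_nhds hx)).differentiableAt (by simp)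
  rw [this.deriv_eq, (hd.hasDerivAt.fun_sub ((hasDerivAt_inv hx.ne').fun_pow 2)).deriv]
  simp
  field_simp

/-! The main argument -/

noncomputable def g (lam x : ℝ) : ℝ := -((deriv digamma x) ^ 2 + deriv (deriv digamma) x -
        (x ^ 2 + lam * x + 12) / (12 * x ^ 4 * (x + 1) ^ 2))

noncomputable def P (lam x : ℝ) : ℝ :=
  ((x + 2)⁻¹) ^ 2 + lam * ((x + 1)⁻¹ * ((x + 2)⁻¹) ^ 2) + 12 * (((x + 1)⁻¹) ^ 2 * ((x + 2)⁻¹) ^ 2)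

noncomputable def B (lam x : ℝ) : ℝ :=
  (1 / 24) * (((x + 1)⁻¹) ^ 2 + lam * ((x + 0)⁻¹ * ((x + 1)⁻¹) ^ 2)
      + 12 * (((x + 0)⁻¹) ^ 2 * ((x + 1)⁻¹) ^ 2))
    - (1 / 24) * (P lam x - 2 * ((x + 1)⁻¹ * P lam x) + ((x + 1)⁻¹) ^ 2 * P lam x)
    + (x + 0)⁻¹ + (1 / 2) * ((x + 0)⁻¹) ^ 2 - deriv digamma x

lemma Dec_P (lam : ℝ) : Dec (P lam) := by
  have v := Dec_inv (a := 1) (by norm_num)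
  have w := Dec_inv (a := 2) (by norm_num)
  exact ((w.pow 1).add ((v.mul (w.pow 1)).const_mul lam)).add
    (((v.pow 1).mul (w.pow 1)).const_mul 12)

lemma Dec_B (lam : ℝ) : Dec (B lam) := by
  have u := Dec_inv (a := 0) (by norm_num)
  have v := Dec_inv (a := 1) (by norm_num)
  have p := Dec_P lam
  exact (((((((v.pow 1).add ((u.mul (v.pow 1)).const_mul lam)).add
    (((u.pow 1).mul (v.pow 1)).const_mul 12)).const_mul (1 / 24)).sub
    (((p.sub ((v.mul p).const_mul 2)).add ((v.pow 1).mul p)).const_mul (1 / 24))).add u).add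
    ((u.pow 1).const_mul (1 / 2))).sub Dec_tri

lemma Dec_g (lam : ℝ) : Dec (g lam) := by
  have u := Dec_inv (a := 0) (by norm_num)
  have v := Dec_inv (a := 1) (by norm_num)
  refine (((((((u.pow 1).mul (v.pow 1)).const_mul (1 / 12)).add
    (((u.pow 2).mul (v.pow 1)).const_mul (lam / 12))).add ((u.pow 3).mul (v.pow 1))).sub
    (Dec_tri.pow 1)).sub Dec_tri.deriv).congr fun x hx => ?_
  have h1 : x + 1 ≠ 0 := by positivity
  unfold g
  simp only [add_zero, Nat.reduceAdd]
  field_simp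
  ring

lemma g_step (lam : ℝ) {x : ℝ} (hx : 0 < x) :
    g lam x - g lam (x + 1) = 2 * ((x + 0)⁻¹) ^ 2 * B lam x := by
  have h1 : x + 1 ≠ 0 := by positivity
  have h2 : x + 2 ≠ 0 := by positivity
  unfold g B P
  rw [tri_add_one hx, tetra_add_one hx, show x + 1 + 1 = x + 2 by ring, add_zero]
  generalize deriv digamma x = p
  generalize deriv (deriv digamma) x = q
  field_simp
  ring

lemma B_step (lam : ℝ) {x : ℝ} (hx : 0 < x) :
    B lam x - B lam (x + 1) = (576 * x + 2244 * x ^ 2 + 3708 * x ^ 3 + 2944 * x ^ 4 + 1116 * x ^ 5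
      + 164 * x ^ 6 + (lam - 4) * (144 * x + 638 * x ^ 2 + 1181 * x ^ 3 + 1155 * x ^ 4 + 623 * x ^ 5
      + 175 * x ^ 6 + 20 * x ^ 7)) / (24 * x ^ 2 * (x + 1) ^ 4 * (x + 2) ^ 4 * (x + 3) ^ 2) := by
  have h1 : x + 1 ≠ 0 := by positivity
  have h2 : x + 2 ≠ 0 := by positivity
  have h3 : x + 3 ≠ 0 := by positivity
  unfold B P
  rw [tri_add_one hx, show x + 1 + 1 = x + 2 by ring, show x + 1 + 2 = x + 3 by ring, add_zero,
    add_zero]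
  generalize deriv digamma x = p
  field_simp
  ring

lemma CM_B : CM (B 4) := by
  refine CM_of_step (Dec_B 4) ?_
  have u := CM_inv (a := 0) (by norm_num)
  have v := CM_inv (a := 1) (by norm_num)
  have w := CM_inv (a := 2) (by norm_num)
  have z := CM_inv (a := 3) (by norm_num)
  refine ((((w.pow 4).mul (z.pow 2)).const_mul (c := 1 / 24) (by norm_num)).mul
    (((((((u.mul (v.pow 4)).const_mul (c := 576) (by norm_num)).add
    ((v.pow 4).const_mul (c := 528) (by norm_num))).add
    ((v.pow 3).const_mul (c := 512) (by norm_num))).add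
    ((v.pow 2).const_mul (c := 580) (by norm_num))).add
    (v.const_mul (c := 460) (by norm_num))).add
    (CM.const (c := 164) (by norm_num)))).congr fun x hx => ?_
  rw [B_step 4 hx]
  have h1 : x + 1 ≠ 0 := by positivity
  have h2 : x + 2 ≠ 0 := by positivity
  have h3 : x + 3 ≠ 0 := by positivity
  simp only [add_zero]
  field_simp
  ring

lemma CM_g4 : CM (g 4) := by
  refine CM_of_step (Dec_g 4) ?_
  have u := CM_inv (a := 0) (by norm_num)
  exact (((u.pow 2).const_mul (c := 2) (by norm_num)).mul CM_B).congr fun x hx => g_step 4 hx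

lemma CM_g {lam : ℝ} (h : 4 ≤ lam) : CM (g lam) := by
  have u := CM_inv (a := 0) (by norm_num)
  have v := CM_inv (a := 1) (by norm_num)
  refine (CM_g4.add (((u.pow 3).mul (v.pow 2)).const_mul (c := (lam - 4) / 12)
    (by linarith))).congr fun x hx => ?_
  have h1 : x + 1 ≠ 0 := by positivity
  unfold g
  simp only [add_zero]
  field_simp
  ring

lemma not_CM {lam : ℝ} (h : CM (g lam)) : 4 ≤ lam := by
  by_contra! hl
  have hd : 0 < 4 - lam := by linarith
  -- for large `x` the differences of `B` are negative
  obtain ⟨X, hX⟩ := exists_gt (max 1 (10752 / (20 * (4 - lam))))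
  have hX1 : 1 < X := (le_max_left _ _).trans_lt hX
  have hX2 : 10752 / (20 * (4 - lam)) < X := (le_max_right _ _).trans_lt hX
  have hBs : ∀ y, X ≤ y → B lam y - B lam (y + 1) < 0 := by
    intro y hy
    have hy1 : 1 < y := hX1.trans_le hy
    have hy0 : 0 < y := by linarith
    rw [B_step lam hy0]
    refine div_neg_of_neg_of_pos ?_ (by positivity)
    have hy2 : 10752 < y * (20 * (4 - lam)) := by
      rw [← div_lt_iff₀ (by positivity)]
      exact hX2.trans_le hy
    have e : ∀ k : ℕ, k ≤ 6 → y ^ k ≤ y ^ 6 := fun k hk => pow_le_pow_right₀ hy1.le hk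
    have e1 := e 1 (by norm_num)
    rw [pow_one] at e1
    have e2 := e 2 (by norm_num)
    have e3 := e 3 (by norm_num)
    have e4 := e 4 (by norm_num)
    have e5 := e 5 (by norm_num)
    have h6 : 0 < y ^ 6 := by positivity
    have m := mul_lt_mul_of_pos_right hy2 h6
    have q : 0 ≤ (4 - lam) * (144 * y + 638 * y ^ 2 + 1181 * y ^ 3 + 1155 * y ^ 4 + 623 * y ^ 5
      + 175 * y ^ 6) := by positivity
    nlinarith
  have hB : ∀ y, X ≤ y → B lam y ≤ 0 := by
    intro y hy
    have := nonneg_of_step (a := fun y => - B lam y) (x := y) ?_ ?_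
    · simpa using this
    · have := ((Dec_B lam).2 0).neg
      simpa using this
    · intro z hz
      have := hBs z (hy.trans hz)
      linarith
  have hB' : B lam X < 0 := by
    have h1 := hBs X le_rfl
    have h2 := hB (X + 1) (by linarith)
    linarith
  have hX0 : 0 < X := by linarith
  have hg1 : g lam X < g lam (X + 1) := by
    have := g_step lam hX0
    have hp : 0 < 2 * ((X + 0)⁻¹) ^ 2 := by rw [add_zero]; positivity
    nlinarith [mul_neg_of_pos_of_neg hp hB']
  have hg2 : g lam (X + 1) ≤ 0 := by
    have := nonneg_of_step (a := fun y => - g lam y) (x := X + 1) ?_ ?_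
    · simpa using this
    · have := ((Dec_g lam).2 0).neg
      simpa using this
    · intro z hz
      have hz0 : 0 < z := by linarith
      have h1 := g_step lam hz0
      have hp : 0 < 2 * ((z + 0)⁻¹) ^ 2 := by rw [add_zero]; positivity
      have h2 := mul_nonpos_of_nonneg_of_nonpos hp.le (hB z (by linarith))
      linarith
  have := h.2 0 X hX0
  simp at this
  linarith

end CMProof

theorem stmt_1 (lam : ℝ) :
    CompletelyMonotonicOn
      (fun x : ℝ => -((deriv digamma x) ^ 2 + deriv (deriv digamma) x -
        (x ^ 2 + lam * x + 12) / (12 * x ^ 4 * (x + 1) ^ 2)))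
      (Set.Ioi 0) ↔ 4 ≤ lam := by
  rw [CMProof.CM_iff]
  exact ⟨fun h => CMProof.not_CM h, fun h => CMProof.CM_g h⟩
end
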